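/- arXiv:1808.03886 — 4 statements merged into one kernel-verified Lean document; each statement's English description precedes it below -/
import Mathlib

section
/- For k ∈ ℝ, define 𝓛_k : M₃(ℝ) → M₃(ℝ) by 𝓛_k(a) = k·a + (tr a)·I − aᵀ. Then 𝓛_k is a linear automorphism of M₃(ℝ) if and only if k ∉ {−2, −1, 1}. -/
open Matrix

/-- The space of 3×3 real matrices. -/
abbrev M3 := Matrix (Fin 3) (Fin 3) ℝ

/-- The linear operator `L(a) = (tr a)·I − aᵀ` on `M₃(ℝ)`. -/
noncomputable def Llin : Module.End ℝ M3 :=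
  (Matrix.traceLinearMap (Fin 3) ℝ ℝ).smulRight (1 : M3)
    - (Matrix.transposeLinearEquiv (Fin 3) (Fin 3) ℝ ℝ).toLinearMap

/-- The linear operator `𝓛_k(a) = k·a + (tr a)·I − aᵀ` on `M₃(ℝ)`. -/
noncomputable def Lk (k : ℝ) : Module.End ℝ M3 := k • LinearMap.id + Llin

/-!
Write `F` for the operator `a ↦ k • a + (tr a) • 1 - aᵀ` on `n × n` matrices over a commutative
ring. Then `F 1 = (k + n - 1) • 1`, and modulo multiples of `1` one has
`F (k • c + cᵀ) = (k² - 1) • c`; so if `k + n - 1` and `k² - 1` are units, then `F` is onto,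
hence bijective because the matrices form a finitely generated module.
Conversely, taking the trace of `F a` shows that `k + n - 1` is a unit when `F` is onto, and
solving for a matrix unit off the diagonal shows the same for `k² - 1`.
-/

section CommRing

variable {n R : Type*} [Fintype n] [DecidableEq n] [CommRing R]

variable (n) in
/-- The operator `a ↦ k • a + (tr a) • 1 - aᵀ` on square matrices over a commutative ring, written
in the same shape as `Lk k`, which is its instance for `3 × 3` real matrices by definition. -/
def smulAddTraceSubTranspose (k : R) : Module.End R (Matrix n n R) :=
  k • LinearMap.id +
    ((traceLinearMap n R R).smulRight 1 - (transposeLinearEquiv n n R R).toLinearMap)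

theorem smulAddTraceSubTranspose_apply (k : R) (a : Matrix n n R) :
    smulAddTraceSubTranspose n k a = k • a + (a.trace • 1 - aᵀ) :=
  rfl

theorem smulAddTraceSubTranspose_one (k : R) :
    smulAddTraceSubTranspose n k 1 = (k + (Fintype.card n - 1)) • 1 := by
  rw [smulAddTraceSubTranspose_apply, trace_one, transpose_one]
  module

theorem trace_smulAddTraceSubTranspose (k : R) (a : Matrix n n R) :
    (smulAddTraceSubTranspose n k a).trace = (k + (Fintype.card n - 1)) * a.trace := by
  simp only [smulAddTraceSubTranspose_apply, trace_add, trace_sub, trace_smul, trace_one,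
    trace_transpose, smul_eq_mul]
  ring

theorem smulAddTraceSubTranspose_smul_add_transpose (k : R) (c : Matrix n n R) :
    smulAddTraceSubTranspose n k (k • c + cᵀ) = (k ^ 2 - 1) • c + ((k + 1) * c.trace) • 1 := by
  simp only [smulAddTraceSubTranspose_apply, trace_add, trace_smul, trace_transpose,
    transpose_add, transpose_smul, transpose_transpose, smul_eq_mul]
  module

theorem smulAddTraceSubTranspose_apply_of_ne (k : R) (a : Matrix n n R) {i j : n} (hij : i ≠ j) :
    smulAddTraceSubTranspose n k a i j = k * a i j - a j i := by
  simp [smulAddTraceSubTranspose_apply, hij, sub_eq_add_neg]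

theorem smulAddTraceSubTranspose_surjective {k : R} (h_trace : IsUnit (k + (Fintype.card n - 1)))
    (h_sq : IsUnit (k ^ 2 - 1)) :
    Function.Surjective (smulAddTraceSubTranspose n k) := by
  rw [← LinearMap.range_eq_top, Submodule.eq_top_iff']
  intro c
  have one_mem : (1 : Matrix n n R) ∈ (smulAddTraceSubTranspose n k).range := by
    rw [← Submodule.smul_mem_iff_of_isUnit _ h_trace, ← smulAddTraceSubTranspose_one]
    exact LinearMap.mem_range_self _ _
  rw [← Submodule.smul_mem_iff_of_isUnit _ h_sq,
    ← Submodule.add_mem_iff_left _ (Submodule.smul_mem _ ((k + 1) * c.trace) one_mem),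
    ← smulAddTraceSubTranspose_smul_add_transpose]
  exact LinearMap.mem_range_self _ _

theorem isUnit_add_card_sub_one_of_surjective [Nonempty n] {k : R}
    (h : Function.Surjective (smulAddTraceSubTranspose n k)) :
    IsUnit (k + (Fintype.card n - 1)) := by
  obtain ⟨i⟩ := ‹Nonempty n›
  obtain ⟨a, ha⟩ := h (single i i 1)
  apply IsUnit.of_mul_eq_one a.trace
  rw [← trace_smulAddTraceSubTranspose, ha, trace_single_eq_same]

theorem isUnit_sq_sub_one_of_surjective [Nontrivial n] {k : R}
    (h : Function.Surjective (smulAddTraceSubTranspose n k)) :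
    IsUnit (k ^ 2 - 1) := by
  obtain ⟨i, j, hij⟩ := exists_pair_ne n
  obtain ⟨a, ha⟩ := h (single i j 1)
  have h_ij : k * a i j - a j i = 1 := by
    rw [← smulAddTraceSubTranspose_apply_of_ne k a hij, ha, single_apply_same]
  have h_ji : k * a j i - a i j = 0 := by
    rw [← smulAddTraceSubTranspose_apply_of_ne k a hij.symm, ha, single_apply_of_row_ne hij]
  apply IsUnit.of_mul_eq_one (a j i)
  linear_combination h_ij + k * h_ji

theorem Lk_bijective_iff_general [Nontrivial n] (k : R) :
    Function.Bijective (smulAddTraceSubTranspose n k) ↔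
      IsUnit (k + (Fintype.card n - 1)) ∧ IsUnit (k + 1) ∧ IsUnit (k - 1) := by
  have sq_sub_one : k ^ 2 - 1 = (k + 1) * (k - 1) := by ring
  rw [← IsUnit.mul_iff, ← sq_sub_one]
  constructor
  · intro h
    exact ⟨isUnit_add_card_sub_one_of_surjective h.surjective,
      isUnit_sq_sub_one_of_surjective h.surjective⟩
  · rintro ⟨h_trace, h_sq⟩
    exact OrzechProperty.bijective_of_surjective_endomorphism _
      (smulAddTraceSubTranspose_surjective h_trace h_sq)

end CommRing

theorem Lk_bijective_iff (k : ℝ) :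
    Function.Bijective (Lk k) ↔ k ∉ ({-2, -1, 1} : Set ℝ) := by
  refine (Lk_bijective_iff_general (n := Fin 3) k).trans ?_
  norm_num [sub_eq_zero, add_eq_zero_iff_eq_neg]
end

section
/- Let r be a positive integer, a₁, a₂ ∈ M₃(ℝ), c₁, c₂ ∈ ℝ³, and let θ ∈ M₃(ℝ) with tr θ = 0. If 2a₁ = L(a₁) − E(c₁), 2c₁ = −Γ(a₁), r·a₁ + 2a₂ = L(a₂) − E(c₂) + θ, and r·c₁ + 2c₂ = −Γ(a₂) + Γ(θ), then a₁ = 0 and c₁ = 0. -/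
open Matrix

/-- The Levi–Civita symbol on `Fin 3`. -/
noncomputable def eps (i j k : Fin 3) : ℝ :=
  (((j : ℕ) : ℝ) - ((i : ℕ) : ℝ)) * (((k : ℕ) : ℝ) - ((i : ℕ) : ℝ)) *
    (((k : ℕ) : ℝ) - ((j : ℕ) : ℝ)) / 2

/-- The operator `L(a) = (tr a)·I − aᵀ`. -/
noncomputable def Lmap (a : M3) : M3 := (Matrix.trace a) • (1 : M3) - aᵀ

/-- The map `Γ : M₃(ℝ) → ℝ³`, `Γ(a)_l = Σ_{i,k} ε_{ikl} a_{ik}`. -/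
noncomputable def Gam (a : M3) : Fin 3 → ℝ := fun l => ∑ i, ∑ k, eps i k l * a i k

/-- The map `E : ℝ³ → M₃(ℝ)`, `E(c)_{li} = Σ_k ε_{kli} c_k`. -/
noncomputable def Emap (c : Fin 3 → ℝ) : M3 := fun l i => ∑ k, eps k l i * c k

/-!
Let `X` be the first component `L(a) − E(c) − 2a` of the operator `(a, c) ↦ (L(a) − E(c), −Γ(a))`
shifted by `2`. Then `tr X = 0`, and `Γ(X) = −Γ(a) − 2c` is the second component, so the image of
the shifted operator lies in the space of pairs `(x, Γ(x))` with `tr x = 0`. The pair `(θ, Γ(θ))`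
lies in that space too, hence so does `(a₁, c₁)`. The kernel of the shifted operator meets this
space only in `0`: on the kernel `Γ(a₁) = −2c₁`, so `Γ(a₁) = c₁` forces `c₁ = 0`, and what remains
is `2a₁ = −a₁ᵀ`, whereas transposition only has the eigenvalues `±1`.
-/

theorem eq_zero_of_transpose_eq_smul {n R M : Type*} [Ring R] [IsDomain R] [AddCommGroup M]
    [Module R M] [Module.IsTorsionFree R M] {c : R} (hc : c ^ 2 ≠ 1) {A : Matrix n n M}
    (h : Aᵀ = c • A) : A = 0 := by
  have hsq : A = c ^ 2 • A :=
    calc A = (c • A)ᵀ := by rw [← h, transpose_transpose]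
      _ = c ^ 2 • A := by rw [transpose_smul, h, smul_smul, sq]
  ext i j
  have hij : (c ^ 2 - 1) • A i j = 0 := by
    rw [sub_smul, one_smul, sub_eq_zero]
    exact (congrFun₂ hsq i j).symm
  exact (smul_eq_zero.mp hij).resolve_left (sub_ne_zero.mpr hc)

theorem eps_rotate (i j k : Fin 3) : eps j k i = eps i j k := by
  unfold eps
  ring

theorem eps_swap (i j k : Fin 3) : eps j i k = -eps i j k := by
  unfold eps
  ring

theorem eps_self_right (i j : Fin 3) : eps i j j = 0 := by
  simp [eps]

theorem sum_eps_mul_eps (l m : Fin 3) :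
    ∑ i, ∑ k, eps i k l * eps i k m = if l = m then 2 else 0 := by
  fin_cases l <;> fin_cases m <;> norm_num [eps, Fin.sum_univ_three]

theorem trace_Lmap (a : M3) : trace (Lmap a) = 2 * trace a := by
  rw [Lmap, trace_sub, trace_smul, trace_one, trace_transpose, Fintype.card_fin, smul_eq_mul]
  push_cast
  ring

theorem trace_Emap (c : Fin 3 → ℝ) : trace (Emap c) = 0 := by
  simp [trace, Emap, eps_self_right]

theorem Emap_zero : Emap 0 = 0 := by
  ext
  simp [Emap]

theorem isLinearMap_Gam : IsLinearMap ℝ Gam where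
  map_add a b := by
    ext
    simp [Gam, mul_add, Finset.sum_add_distrib]
  map_smul r a := by
    ext
    simp [Gam, Finset.mul_sum, mul_left_comm]

theorem Gam_transpose (a : M3) : Gam aᵀ = -Gam a := by
  ext l
  calc ∑ i, ∑ k, eps i k l * a k i = ∑ k, ∑ i, eps i k l * a k i := Finset.sum_comm
    _ = ∑ k, ∑ i, -(eps k i l * a k i) := by simp only [← neg_mul, ← eps_swap]
    _ = -∑ k, ∑ i, eps k i l * a k i := by simp only [Finset.sum_neg_distrib]

theorem Gam_eq_zero_of_isSymm {a : M3} (ha : a.IsSymm) : Gam a = 0 := by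
  have h := Gam_transpose a
  rwa [ha.eq, self_eq_neg] at h

theorem Gam_Lmap (a : M3) : Gam (Lmap a) = Gam a := by
  rw [Lmap, isLinearMap_Gam.map_sub, Gam_eq_zero_of_isSymm (isSymm_one.smul _), Gam_transpose,
    zero_sub, neg_neg]

theorem Gam_Emap (c : Fin 3 → ℝ) : Gam (Emap c) = (2 : ℝ) • c := by
  ext l
  calc ∑ i, ∑ k, eps i k l * ∑ m, eps m i k * c m
      = ∑ i, ∑ k, ∑ m, eps i k l * eps i k m * c m := by
        simp only [Finset.mul_sum, mul_assoc, eps_rotate]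
    _ = ∑ m, (∑ i, ∑ k, eps i k l * eps i k m) * c m := by
        simp only [Finset.sum_mul]
        exact (Finset.sum_congr rfl fun _ _ => Finset.sum_comm).trans Finset.sum_comm
    _ = 2 * c l := by simp [sum_eps_mul_eps]

theorem trace_Lmap_sub_Emap_sub (a : M3) (c : Fin 3 → ℝ) :
    trace (Lmap a - Emap c - (2 : ℝ) • a) = 0 := by
  rw [trace_sub, trace_sub, trace_smul, trace_Lmap, trace_Emap, smul_eq_mul, sub_zero, sub_self]

theorem Gam_Lmap_sub_Emap_sub (a : M3) (c : Fin 3 → ℝ) :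
    Gam (Lmap a - Emap c - (2 : ℝ) • a) = -Gam a - (2 : ℝ) • c := by
  rw [isLinearMap_Gam.map_sub, isLinearMap_Gam.map_sub, isLinearMap_Gam.map_smul, Gam_Lmap,
    Gam_Emap]
  module

theorem two_smul_eq_neg_Gam {a : M3} {c : Fin 3 → ℝ} (h : (2 : ℝ) • a = Lmap a - Emap c) :
    (2 : ℝ) • c = -Gam a := by
  have hGam := Gam_Lmap_sub_Emap_sub a c
  rw [← h, sub_self, isLinearMap_Gam.map_zero] at hGam
  exact (sub_eq_zero.mp hGam.symm).symm

theorem eq_zero_of_two_smul_eq_Lmap_sub_Emap {a : M3} {c : Fin 3 → ℝ}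
    (h : (2 : ℝ) • a = Lmap a - Emap c) (htr : trace a = 0) (hGam : Gam a = c) :
    a = 0 ∧ c = 0 := by
  have hc : c = 0 := by
    have h3 : (3 : ℝ) • c = 0 := by
      linear_combination (norm := module) two_smul_eq_neg_Gam h - hGam
    exact (smul_eq_zero.mp h3).resolve_left three_ne_zero
  have ha : aᵀ = (-2 : ℝ) • a := by
    rw [neg_smul, h, Lmap, htr, hc, Emap_zero, zero_smul, zero_sub, sub_zero, neg_neg]
  exact ⟨eq_zero_of_transpose_eq_smul (by norm_num) ha, hc⟩

theorem vanishing_lemma_general {r : ℝ} (hr : r ≠ 0) {a₁ a₂ : M3} {c₁ c₂ : Fin 3 → ℝ}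
    {θ : M3} (hθ : trace θ = 0)
    (h1 : (2 : ℝ) • a₁ = Lmap a₁ - Emap c₁)
    (h3 : r • a₁ + (2 : ℝ) • a₂ = Lmap a₂ - Emap c₂ + θ)
    (h4 : r • c₁ + (2 : ℝ) • c₂ = -Gam a₂ + Gam θ) :
    a₁ = 0 ∧ c₁ = 0 := by
  have hra : r • a₁ = Lmap a₂ - Emap c₂ - (2 : ℝ) • a₂ + θ := by
    rw [eq_sub_of_add_eq h3]
    abel
  have htr : r • trace a₁ = 0 := by
    rw [← trace_smul, hra, trace_add, trace_Lmap_sub_Emap_sub, hθ, add_zero]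
  have hGam : r • Gam a₁ = r • c₁ :=
    calc r • Gam a₁ = -Gam a₂ - (2 : ℝ) • c₂ + Gam θ := by
          rw [← isLinearMap_Gam.map_smul, hra, isLinearMap_Gam.map_add, Gam_Lmap_sub_Emap_sub]
      _ = r • c₁ := by
          rw [eq_sub_of_add_eq h4]
          abel
  exact eq_zero_of_two_smul_eq_Lmap_sub_Emap h1 ((smul_eq_zero.mp htr).resolve_left hr)
    (smul_right_injective _ hr hGam)

theorem vanishing_lemma (r : ℕ) (hr : 0 < r) (a₁ a₂ : M3) (c₁ c₂ : Fin 3 → ℝ)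
    (θ : M3) (hθ : Matrix.trace θ = 0)
    (h1 : (2 : ℝ) • a₁ = Lmap a₁ - Emap c₁)
    (h2 : (2 : ℝ) • c₁ = -Gam a₁)
    (h3 : (r : ℝ) • a₁ + (2 : ℝ) • a₂ = Lmap a₂ - Emap c₂ + θ)
    (h4 : (r : ℝ) • c₁ + (2 : ℝ) • c₂ = -Gam a₂ + Gam θ) :
    a₁ = 0 ∧ c₁ = 0 :=
  vanishing_lemma_general (Nat.cast_ne_zero.mpr hr.ne') hθ h1 h3 h4
end

section
/- Let r be a positive integer and b, b' ∈ M₃(ℝ). If b + (tr b)·I − bᵀ = 0 and r·b + b' + (tr b')·I − (b')ᵀ = 0, then b = 0. -/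
open Matrix

/-!
The kernel of `1 + L`, where `L a = (tr a) • 1 - aᵀ`, consists of the trace-free symmetric matrices,
while every element of its range is the sum of a skew-symmetric and a scalar matrix. These meet only
in `0`, so the eigenvalue `-1` of `L` is semisimple. The two equations say that `b` lies in the
kernel and `r • b` in the range.
-/

section VierbeinBracket

variable {n R : Type*} [Fintype n] [DecidableEq n] [Ring R]

variable (n R) in
/-- The operator `L a = ⋆[e, a]` on `su(2)`-valued 1-forms in the matrix model, where the vierbein
`e` is the identity matrix. The same formula is used for square matrices of any size over any
ring. -/
def vierbeinBracket : Module.End R (Matrix n n R) where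
  toFun a := a.trace • 1 - aᵀ
  map_add' a b := by rw [trace_add, add_smul, transpose_add, add_sub_add_comm]
  map_smul' c a := by
    rw [trace_smul, smul_assoc, transpose_smul, RingHom.id_apply, smul_sub]

theorem one_add_vierbeinBracket_apply (a : Matrix n n R) :
    (1 + vierbeinBracket n R) a = a + a.trace • 1 - aᵀ :=
  (add_sub_assoc a _ _).symm

theorem trace_eq_zero_of_mem_ker_one_add_vierbeinBracket {a : Matrix n n R}
    (ha : a ∈ LinearMap.ker (1 + vierbeinBracket n R)) : a.trace = 0 := by
  rw [LinearMap.mem_ker, one_add_vierbeinBracket_apply] at ha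
  cases isEmpty_or_nonempty n with
  | inl _ => exact trace_eq_zero_of_isEmpty a
  | inr hn =>
    obtain ⟨i⟩ := hn
    simpa using congr_fun₂ ha i i

theorem mem_ker_one_add_vierbeinBracket {a : Matrix n n R} :
    a ∈ LinearMap.ker (1 + vierbeinBracket n R) ↔ a.IsSymm ∧ a.trace = 0 := by
  refine ⟨fun ha ↦ ?_, fun ⟨hsymm, htrace⟩ ↦ ?_⟩
  · have htrace := trace_eq_zero_of_mem_ker_one_add_vierbeinBracket ha
    rw [LinearMap.mem_ker, one_add_vierbeinBracket_apply, htrace, zero_smul, add_zero,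
      sub_eq_zero] at ha
    exact ⟨ha.symm, htrace⟩
  · rw [LinearMap.mem_ker, one_add_vierbeinBracket_apply, htrace, hsymm.eq, zero_smul, add_zero,
      sub_self]

theorem trace_one_add_vierbeinBracket (a : Matrix n n R) :
    ((1 + vierbeinBracket n R) a).trace = Fintype.card n • a.trace := by
  rw [one_add_vierbeinBracket_apply, trace_sub, trace_add, trace_transpose, trace_smul, trace_one,
    add_sub_cancel_left, smul_eq_mul, nsmul_eq_mul, Nat.cast_comm]

theorem disjoint_ker_range_one_add_vierbeinBracket [IsAddTorsionFree R] :
    Disjoint (LinearMap.ker (1 + vierbeinBracket n R))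
      (LinearMap.range (1 + vierbeinBracket n R)) := by
  rw [Submodule.disjoint_def]
  rintro _ hker ⟨a, rfl⟩
  obtain ⟨hsymm, htrace⟩ := mem_ker_one_add_vierbeinBracket.mp hker
  cases isEmpty_or_nonempty n with
  | inl _ => exact Subsingleton.elim _ _
  | inr _ =>
    have ha : a.trace = 0 := by
      rwa [trace_one_add_vierbeinBracket, smul_eq_zero_iff_right Fintype.card_ne_zero] at htrace
    have hskew : (1 + vierbeinBracket n R) a = a - aᵀ := by
      rw [one_add_vierbeinBracket_apply, ha, zero_smul, add_zero]
    rw [hskew] at hsymm ⊢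
    have hneg : a - aᵀ = -(a - aᵀ) :=
      calc a - aᵀ = (a - aᵀ)ᵀ := hsymm.eq.symm
        _ = -(a - aᵀ) := by rw [transpose_sub, transpose_transpose, neg_sub]
    ext i j
    exact self_eq_neg.mp (congr_fun₂ hneg i j)

theorem log_terms_vanish_general [IsAddTorsionFree R] [NoZeroDivisors R] {c : R} (hc : c ≠ 0)
    {b b' : Matrix n n R} (hb : b + b.trace • (1 : Matrix n n R) - bᵀ = 0)
    (hb' : c • b + b' + b'.trace • (1 : Matrix n n R) - b'ᵀ = 0) :
    b = 0 := by
  have hker : b ∈ LinearMap.ker (1 + vierbeinBracket n R) := by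
    rwa [LinearMap.mem_ker, one_add_vierbeinBracket_apply]
  have hrange : c • b ∈ LinearMap.range (1 + vierbeinBracket n R) := by
    refine ⟨-b', ?_⟩
    rw [map_neg, one_add_vierbeinBracket_apply, neg_eq_iff_add_eq_zero, ← hb']
    abel
  have hcb : c • b = 0 :=
    Submodule.disjoint_def.mp disjoint_ker_range_one_add_vierbeinBracket _
      (Submodule.smul_mem _ c hker) hrange
  exact (smul_eq_zero_iff_right hc).mp hcb

end VierbeinBracket

theorem log_terms_vanish (r : ℕ) (hr : 0 < r) (b b' : M3)
    (h1 : b + (Matrix.trace b) • (1 : M3) - bᵀ = 0)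
    (h2 : (r : ℝ) • b + b' + (Matrix.trace b') • (1 : M3) - b'ᵀ = 0) :
    b = 0 :=
  log_terms_vanish_general (Nat.cast_ne_zero.mpr hr.ne') h1 h2
end

section
/- Let f₁(y) = 6e^{2y}/(e^{4y} + 4e^{2y} + 1) and g₁(y) = 6(e^{2y}+1)e^{2y}/((e^{4y}+4e^{2y}+1)(e^{2y}−1)) for y > 0. Then for every y > 0: f₁ and g₁ are differentiable at y with f₁'(y) = 2·g₁(y)·(f₁(y) − 1) and g₁'(y) = f₁(y)² − 2·f₁(y) − g₁(y)². Moreover f₁(y) → 1 and y·g₁(y) → 1 as y → 0⁺, and f₁(y) → 0 and g₁(y) → 0 as y → +∞. -/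
open Filter Topology

/-- The connection coefficient of the rotationally symmetric Nahm pole solution on `S³ × ℝ⁺`. -/
noncomputable def f₁ (y : ℝ) : ℝ :=
  6 * Real.exp (2 * y) / (Real.exp (4 * y) + 4 * Real.exp (2 * y) + 1)

/-- The Higgs field coefficient of the rotationally symmetric Nahm pole solution on `S³ × ℝ⁺`. -/
noncomputable def g₁ (y : ℝ) : ℝ :=
  6 * (Real.exp (2 * y) + 1) * Real.exp (2 * y) /
    ((Real.exp (4 * y) + 4 * Real.exp (2 * y) + 1) * (Real.exp (2 * y) - 1))

/-!
In hyperbolic form the solution is `f₁ = 3 / (2 sinh² y + 3)` and `g₁ = f₁ coth y`. Differentiating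
`f₁` gives the first flow equation. Since `coth' = 1 - coth²`, the product rule reduces the second
one to the algebraic relation `f₁ (3 coth² y - 1) = 3 (coth² y - 1)`. The Nahm pole of `g₁` is the
simple pole of `coth` at `0`, and `g₁` decays with `f₁` at infinity because `coth` tends to `1`.
-/

section HyperbolicForm

open Real

/-- The hyperbolic cotangent, which carries the pole of `g₁`. As `x / 0 = 0`, its value at the
pole is `coth 0 = 0`. -/
noncomputable def coth (x : ℝ) : ℝ := cosh x / sinh x

theorem coth_sq {x : ℝ} (hx : x ≠ 0) : coth x ^ 2 = 1 / sinh x ^ 2 + 1 := by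
  have hsinh : sinh x ≠ 0 := sinh_ne_zero.2 hx
  rw [coth, div_pow, cosh_sq]
  field_simp
  ring

theorem hasDerivAt_coth {x : ℝ} (hx : x ≠ 0) : HasDerivAt coth (1 - coth x ^ 2) x := by
  have hsinh : sinh x ≠ 0 := sinh_ne_zero.2 hx
  refine ((hasDerivAt_cosh x).div (hasDerivAt_sinh x) hsinh).congr_deriv ?_
  rw [coth]
  field_simp

theorem tendsto_mul_coth_nhdsNE_zero : Tendsto (fun x => x * coth x) (𝓝[≠] 0) (𝓝 1) := by
  have hslope : Tendsto (fun x => x⁻¹ * sinh x) (𝓝[≠] 0) (𝓝 1) := by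
    simpa using (hasDerivAt_sinh 0).tendsto_slope_zero
  have hcosh : Tendsto cosh (𝓝[≠] 0) (𝓝 1) := by
    simpa using continuous_cosh.continuousAt.tendsto.mono_left
      (nhdsWithin_le_nhds (a := (0 : ℝ)) (s := {0}ᶜ))
  have hquot := hcosh.div hslope one_ne_zero
  rw [div_one] at hquot
  refine hquot.congr fun x => ?_
  simp only [Pi.div_apply, coth, div_eq_mul_inv, mul_inv, inv_inv]
  ring

theorem tendsto_sinh_atTop : Tendsto sinh atTop atTop :=
  sinhOrderIso.tendsto_atTop

theorem tendsto_coth_atTop : Tendsto coth atTop (𝓝 1) := by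
  have hdecay : Tendsto (fun x => 1 + exp (-x) / sinh x) atTop (𝓝 (1 + 0)) :=
    (tendsto_exp_neg_atTop_nhds_zero.div_atTop tendsto_sinh_atTop).const_add 1
  rw [add_zero] at hdecay
  refine hdecay.congr' ?_
  filter_upwards [eventually_ne_atTop 0] with x hx
  have hsinh : sinh x ≠ 0 := sinh_ne_zero.2 hx
  rw [coth, ← cosh_sub_sinh]
  field_simp
  ring

theorem exp_two_mul_add_one (x : ℝ) : exp (2 * x) + 1 = 2 * exp x * cosh x := by
  rw [cosh_eq, exp_neg, two_mul, exp_add]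
  field_simp

theorem exp_two_mul_sub_one (x : ℝ) : exp (2 * x) - 1 = 2 * exp x * sinh x := by
  rw [sinh_eq, exp_neg, two_mul, exp_add]
  field_simp

theorem exp_four_mul_add_four_mul_exp_two_mul_add_one (x : ℝ) :
    exp (4 * x) + 4 * exp (2 * x) + 1 = 2 * exp (2 * x) * (2 * sinh x ^ 2 + 3) := by
  have hexp_two : exp (2 * x) = exp x ^ 2 := by rw [← exp_nat_mul, Nat.cast_ofNat]
  have hexp_four : exp (4 * x) = exp x ^ 4 := by rw [← exp_nat_mul, Nat.cast_ofNat]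
  rw [hexp_two, hexp_four, sinh_eq, exp_neg]
  field_simp
  ring

theorem f₁_eq_div_sinh_sq (y : ℝ) : f₁ y = 3 / (2 * sinh y ^ 2 + 3) := by
  rw [f₁, exp_four_mul_add_four_mul_exp_two_mul_add_one]
  field_simp
  norm_num

theorem g₁_eq_f₁_mul_coth (y : ℝ) : g₁ y = f₁ y * coth y := by
  rw [g₁, f₁, coth, exp_two_mul_add_one, exp_two_mul_sub_one]
  field_simp

theorem f₁_mul_three_coth_sq_sub_one {y : ℝ} (hy : y ≠ 0) :
    f₁ y * (3 * coth y ^ 2 - 1) = 3 * (coth y ^ 2 - 1) := by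
  have hsinh : sinh y ≠ 0 := sinh_ne_zero.2 hy
  rw [f₁_eq_div_sinh_sq, coth_sq hy]
  field_simp
  ring

theorem hasDerivAt_f₁ (y : ℝ) :
    HasDerivAt f₁ (-(12 * sinh y * cosh y) / (2 * sinh y ^ 2 + 3) ^ 2) y := by
  have hdenom : HasDerivAt (fun y => 2 * sinh y ^ 2 + 3) (4 * sinh y * cosh y) y := by
    refine ((((hasDerivAt_sinh y).fun_pow 2).const_mul 2).add_const 3).congr_deriv ?_
    ring
  rw [funext f₁_eq_div_sinh_sq]
  refine ((hasDerivAt_const y 3).fun_div hdenom (by positivity)).congr_deriv ?_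
  ring

theorem hasDerivAt_f₁_flow {y : ℝ} (hy : y ≠ 0) :
    HasDerivAt f₁ (2 * g₁ y * (f₁ y - 1)) y := by
  have hsinh : sinh y ≠ 0 := sinh_ne_zero.2 hy
  refine (hasDerivAt_f₁ y).congr_deriv ?_
  rw [g₁_eq_f₁_mul_coth, f₁_eq_div_sinh_sq, coth]
  field_simp
  ring

theorem hasDerivAt_g₁_flow {y : ℝ} (hy : y ≠ 0) :
    HasDerivAt g₁ (f₁ y ^ 2 - 2 * f₁ y - g₁ y ^ 2) y := by
  have hprod := (hasDerivAt_f₁_flow hy).fun_mul (hasDerivAt_coth hy)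
  rw [← funext g₁_eq_f₁_mul_coth] at hprod
  refine hprod.congr_deriv ?_
  rw [g₁_eq_f₁_mul_coth]
  linear_combination f₁ y * f₁_mul_three_coth_sq_sub_one hy

theorem tendsto_f₁_nhds_zero : Tendsto f₁ (𝓝 0) (𝓝 1) := by
  have hf₁_zero : f₁ 0 = 1 := by simp [f₁_eq_div_sinh_sq]
  simpa only [hf₁_zero] using (hasDerivAt_f₁ 0).continuousAt.tendsto

theorem tendsto_mul_g₁_nhdsNE_zero : Tendsto (fun y => y * g₁ y) (𝓝[≠] 0) (𝓝 1) := by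
  have hprod := (tendsto_f₁_nhds_zero.mono_left nhdsWithin_le_nhds).mul
    tendsto_mul_coth_nhdsNE_zero
  rw [one_mul] at hprod
  refine hprod.congr fun y => ?_
  rw [g₁_eq_f₁_mul_coth, mul_left_comm]

theorem tendsto_f₁_atTop : Tendsto f₁ atTop (𝓝 0) := by
  have hsinh_sq : Tendsto (fun y => sinh y ^ 2) atTop atTop :=
    (tendsto_pow_atTop two_ne_zero).comp tendsto_sinh_atTop
  rw [funext f₁_eq_div_sinh_sq]
  exact (tendsto_atTop_add_const_right atTop 3
    (hsinh_sq.const_mul_atTop two_pos)).const_div_atTop 3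

theorem tendsto_g₁_atTop : Tendsto g₁ atTop (𝓝 0) := by
  rw [funext g₁_eq_f₁_mul_coth]
  simpa only [zero_mul] using tendsto_f₁_atTop.mul tendsto_coth_atTop

end HyperbolicForm

theorem f₁_g₁_solve_KW_flow :
    (∀ y : ℝ, 0 < y →
      HasDerivAt f₁ (2 * g₁ y * (f₁ y - 1)) y ∧
      HasDerivAt g₁ (f₁ y ^ 2 - 2 * f₁ y - g₁ y ^ 2) y) ∧
    Tendsto f₁ (𝓝[>] (0 : ℝ)) (𝓝 1) ∧
    Tendsto (fun y : ℝ => y * g₁ y) (𝓝[>] (0 : ℝ)) (𝓝 1) ∧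
    Tendsto f₁ atTop (𝓝 0) ∧
    Tendsto g₁ atTop (𝓝 0) := by
  refine ⟨fun y hy => ⟨hasDerivAt_f₁_flow hy.ne', hasDerivAt_g₁_flow hy.ne'⟩, ?_, ?_,
    tendsto_f₁_atTop, tendsto_g₁_atTop⟩
  · exact tendsto_f₁_nhds_zero.mono_left nhdsWithin_le_nhds
  · exact tendsto_mul_g₁_nhdsNE_zero.mono_left (nhdsGT_le_nhdsNE 0)
end
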